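/- Let d ≥ 1 and let σ be the rotation-invariant (normalized uniform) probability measure on the unit sphere of EuclideanSpace ℂ (Fin d). Then for every natural number n and all x, y : Fin n → Fin d, C(n+d−1, n) · ∫_{unit sphere} (∏_{i : Fin n} ψ (x i)) · conj(∏_{i : Fin n} ψ (y i)) dσ(ψ) = (#{π ∈ Perm(Fin n) : x ∘ π = y}) / n!. -/

import Mathlib

open MeasureTheory

/-- The Borel measurable structure on `ℂ^d` (as a Euclidean space). -/
noncomputable instance euclideanSpaceComplexMeasurableSpace (d : ℕ) :
    MeasurableSpace (EuclideanSpace ℂ (Fin d)) := borel _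

instance euclideanSpaceComplexBorelSpace (d : ℕ) :
    BorelSpace (EuclideanSpace ℂ (Fin d)) := ⟨rfl⟩


namespace SymProj

open Finset

/-- The multiset of values of a tuple. -/
def cls {d n : ℕ} (x : Fin n → Fin d) : Sym (Fin d) n :=
  ⟨Finset.univ.val.map x, by simp⟩

lemma cls_surj {d n : ℕ} (s : Sym (Fin d) n) : ∃ x : Fin n → Fin d, cls x = s := by
  obtain ⟨m, hm⟩ := s
  induction m using Quotient.inductionOn with
  | h l =>
    have hl : l.length = n := by simpa using hm
    subst hl
    refine ⟨fun i => l.get i, ?_⟩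
    apply Subtype.ext
    show Finset.univ.val.map (fun i => l.get i) = _
    rw [Fin.univ_val_map]
    simp

lemma count_cls {d n : ℕ} (x : Fin n → Fin d) (j : Fin d) :
    Multiset.count j (cls x).1 = (univ.filter (fun i => x i = j)).card := by
  show Multiset.count j (Finset.univ.val.map x) = _
  rw [Multiset.count_map]
  simp only [eq_comm]
  rfl

lemma cls_eq_iff {d n : ℕ} (x y : Fin n → Fin d) :
    cls x = cls y ↔ ∃ π : Equiv.Perm (Fin n), x ∘ π = y := by
  constructor
  · intro h
    have hc : ∀ c, Nonempty ({a // y a = c} ≃ {a // x a = c}) := by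
      intro c
      apply Fintype.card_eq.mp
      rw [Fintype.card_subtype, Fintype.card_subtype, ← count_cls, ← count_cls, h]
    refine ⟨Equiv.ofFiberEquiv (fun c => (hc c).some), ?_⟩
    funext a
    exact Equiv.ofFiberEquiv_map (fun c => (hc c).some) a
  · rintro ⟨π, rfl⟩
    apply Subtype.ext
    show Finset.univ.val.map x = Finset.univ.val.map (x ∘ π)
    rw [← Multiset.map_map]
    congr 1
    have := congrArg Finset.val (Finset.map_univ_equiv π)
    simpa using this.symm

lemma prod_cls {d n : ℕ} {M : Type*} [CommMonoid M] (f : Fin d → M) (x : Fin n → Fin d) :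
    ∏ i, f (x i) = ((cls x).1.map f).prod := by
  show _ = ((Finset.univ.val.map x).map f).prod
  rw [Multiset.map_map]; rfl

/-- orbit-stabilizer -/
lemma card_orbit {d n : ℕ} (x y : Fin n → Fin d) (h : cls x = cls y) :
    (univ.filter (fun z : Fin n → Fin d => cls z = cls x)).card *
      (univ.filter (fun π : Equiv.Perm (Fin n) => x ∘ π = y)).card = n.factorial := by
  classical
  have h1 : (univ : Finset (Equiv.Perm (Fin n))).card =
      ∑ z ∈ univ.filter (fun z : Fin n → Fin d => cls z = cls x),
        (univ.filter (fun π : Equiv.Perm (Fin n) => x ∘ π = z)).card := by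
    apply Finset.card_eq_sum_card_fiberwise
    intro π _
    simp only [coe_filter, mem_univ, true_and, Set.mem_ofPred_eq]
    exact ((cls_eq_iff _ _).2 ⟨π, rfl⟩).symm
  rw [Finset.card_univ, Fintype.card_perm, Fintype.card_fin] at h1
  rw [h1, ← smul_eq_mul, ← Finset.sum_const]
  apply Finset.sum_congr rfl
  intro z hz
  have hz' : cls y = cls z := by rw [← h]; exact (by simpa using hz : cls z = cls x).symm
  obtain ⟨τ, hτ⟩ := (cls_eq_iff _ _).1 hz'
  apply Finset.card_bij (fun π _ => π * τ)
  · intro π hπ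
    simp only [mem_filter, mem_univ, true_and] at hπ ⊢
    rw [← hτ, ← hπ]; rfl
  · intro a _ b _ hab
    exact mul_right_cancel hab
  · intro π hπ
    simp only [mem_filter, mem_univ, true_and] at hπ
    refine ⟨π * τ⁻¹, ?_, by simp⟩
    simp only [mem_filter, mem_univ, true_and]
    funext i
    have h2 := congrFun hπ (τ⁻¹ i)
    have h3 := congrFun hτ (τ⁻¹ i)
    have h4 : τ (τ⁻¹ i) = i := by simp
    simp only [Function.comp, Equiv.Perm.mul_apply] at h2 h3 ⊢
    rw [h2, ← h3, h4]

lemma sum_inv_card {d n : ℕ} (hd : 1 ≤ d) :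
    ∑ x : Fin n → Fin d,
      ((univ.filter (fun z : Fin n → Fin d => cls z = cls x)).card : ℂ)⁻¹
      = ((n + d - 1).choose n : ℂ) := by
  classical
  rw [← Finset.sum_fiberwise univ (cls (d := d) (n := n))]
  have : ∀ s : Sym (Fin d) n, ∑ x ∈ univ.filter (fun x : Fin n → Fin d => cls x = s),
      ((univ.filter (fun z : Fin n → Fin d => cls z = cls x)).card : ℂ)⁻¹ = 1 := by
    intro s
    obtain ⟨x0, hx0⟩ := cls_surj s
    rw [Finset.sum_congr rfl (g := fun _ =>
      ((univ.filter (fun z : Fin n → Fin d => cls z = s)).card : ℂ)⁻¹)]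
    · rw [Finset.sum_const, nsmul_eq_mul]
      apply mul_inv_cancel₀
      have : 0 < (univ.filter (fun z : Fin n → Fin d => cls z = s)).card :=
        Finset.card_pos.2 ⟨x0, by simp [hx0]⟩
      exact_mod_cast this.ne'
    · intro x hx
      simp only [mem_filter, mem_univ, true_and] at hx
      rw [hx]
  simp only [this, Finset.sum_const, nsmul_eq_mul, mul_one, Finset.card_univ]
  rw [Sym.card_sym_eq_choose, Fintype.card_fin, Nat.add_comm d n]

/-- Polynomial comparison. -/
lemma poly_compare {d n : ℕ} (g : (Fin n → Fin d) → ℂ)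
    (h : ∀ t : Fin d → ℝ, (∀ j, 0 < t j) → ∑ x, g x * ∏ i, (t (x i) : ℂ) = 0)
    (x0 : Fin n → Fin d) : ∑ x ∈ univ.filter (fun x => cls x = cls x0), g x = 0 := by
  classical
  let P : MvPolynomial (Fin d) ℂ :=
    ∑ x : Fin n → Fin d, MvPolynomial.monomial (Multiset.toFinsupp (cls x).1) (g x)
  have hP : P = 0 := by
    apply MvPolynomial.funext_set (fun _ => (fun r : ℝ => (r : ℂ)) '' Set.Ioi 0)
    · intro _
      exact (Set.Ioi_infinite (0:ℝ)).image Complex.ofReal_injective.injOn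
    · intro v hv
      have hv' : ∀ j, ∃ r : ℝ, 0 < r ∧ (r : ℂ) = v j := fun j => hv j (Set.mem_univ j)
      choose t ht0 ht using hv'
      rw [map_zero, ← h t ht0, map_sum]
      apply Finset.sum_congr rfl
      intro x _
      rw [MvPolynomial.eval_monomial]
      congr 1
      rw [prod_cls (fun j => (t j : ℂ))]
      simp only [ht]
      rw [Finset.prod_multiset_map_count, Finsupp.prod]
      simp
  have := congrArg (MvPolynomial.coeff (Multiset.toFinsupp (cls x0).1)) hP
  simp only [P, MvPolynomial.coeff_sum, MvPolynomial.coeff_monomial, MvPolynomial.coeff_zero] at this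
  rw [Finset.sum_filter, ← this]
  apply Finset.sum_congr rfl
  intro x _
  congr 1
  simp only [EmbeddingLike.apply_eq_iff_eq, eq_iff_iff]
  exact Subtype.ext_iff

/-- The unit sphere. -/
abbrev Sph (d : ℕ) := Metric.sphere (0 : EuclideanSpace ℂ (Fin d)) 1

/-- unitary action on the sphere -/
noncomputable def act {d : ℕ} (U : EuclideanSpace ℂ (Fin d) ≃ₗᵢ[ℂ] EuclideanSpace ℂ (Fin d))
    (ψ : Sph d) : Sph d :=
  ⟨U ψ, mem_sphere_zero_iff_norm.mpr ((U.norm_map _).trans (mem_sphere_zero_iff_norm.mp ψ.2))⟩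

lemma continuous_act {d : ℕ} (U : EuclideanSpace ℂ (Fin d) ≃ₗᵢ[ℂ] EuclideanSpace ℂ (Fin d)) :
    Continuous (act U) :=
  (U.continuous.comp continuous_subtype_val).subtype_mk _

lemma integral_act {d : ℕ} (σ : Measure (Sph d))
    (hσ : ∀ U, Measure.map (act U) σ = σ) (U) (f : Sph d → ℂ) (hf : Continuous f) :
    ∫ ψ, f (act U ψ) ∂σ = ∫ ψ, f ψ ∂σ := by
  conv_rhs => rw [← hσ U]
  rw [integral_map (continuous_act U).measurable.aemeasurable]
  exact hf.aestronglyMeasurable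

lemma cont_coord {d : ℕ} (j : Fin d) :
    Continuous (fun ψ : Sph d => (ψ : EuclideanSpace ℂ (Fin d)) j) := by
  fun_prop

lemma integrable_of_cont {d : ℕ} (σ : Measure (Sph d)) [IsProbabilityMeasure σ]
    (f : Sph d → ℂ) (hf : Continuous f) : Integrable f σ := by
  rw [← integrableOn_univ]
  exact hf.continuousOn.integrableOn_compact isCompact_univ

/-- moments -/
noncomputable def F {d n : ℕ} (σ : Measure (Sph d)) (x y : Fin n → Fin d) : ℂ :=
  ∫ ψ : Sph d, (∏ i : Fin n, (ψ : EuclideanSpace ℂ (Fin d)) (x i)) *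
          (starRingEnd ℂ) (∏ i : Fin n, (ψ : EuclideanSpace ℂ (Fin d)) (y i)) ∂σ

lemma cont_F {d n : ℕ} (x y : Fin n → Fin d) :
    Continuous (fun ψ : Sph d => (∏ i : Fin n, (ψ : EuclideanSpace ℂ (Fin d)) (x i)) *
          (starRingEnd ℂ) (∏ i : Fin n, (ψ : EuclideanSpace ℂ (Fin d)) (y i))) := by
  have h : ∀ z : Fin n → Fin d,
      Continuous (fun ψ : Sph d => ∏ i : Fin n, (ψ : EuclideanSpace ℂ (Fin d)) (z i)) :=
    fun z => continuous_finsetProd _ fun i _ => cont_coord (z i)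
  exact (h x).mul (Complex.continuous_conj.comp (h y))

lemma F_congr {d n : ℕ} (σ : Measure (Sph d)) (x y x' y' : Fin n → Fin d)
    (h : cls x = cls x') (h' : cls y = cls y') : F σ x y = F σ x' y' := by
  unfold F
  congr 1
  funext ψ
  rw [prod_cls (fun j => (ψ : EuclideanSpace ℂ (Fin d)) j) x,
    prod_cls (fun j => (ψ : EuclideanSpace ℂ (Fin d)) j) y, h, h', ← prod_cls, ← prod_cls]

/-- Multiplication by a phase. -/
noncomputable def phase (c : ℂ) (hc : ‖c‖ = 1) : ℂ ≃ₗᵢ[ℂ] ℂ where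
  toLinearEquiv := LinearEquiv.smulOfNeZero ℂ ℂ c (by rintro rfl; simp at hc)
  norm_map' z := by
    show ‖c • z‖ = ‖z‖
    rw [norm_smul, hc, one_mul]

/-- Diagonal unitary. -/
noncomputable def diagU {d : ℕ} (u : Fin d → ℂ) (hu : ∀ j, ‖u j‖ = 1) :
    EuclideanSpace ℂ (Fin d) ≃ₗᵢ[ℂ] EuclideanSpace ℂ (Fin d) :=
  LinearIsometryEquiv.piLpCongrRight 2 (fun j => phase (u j) (hu j))

lemma diagU_apply {d : ℕ} (u : Fin d → ℂ) (hu : ∀ j, ‖u j‖ = 1)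
    (v : EuclideanSpace ℂ (Fin d)) (j : Fin d) : diagU u hu v j = u j * v j := rfl

lemma F_off {d n : ℕ} (σ : Measure (Sph d))
    (hσ : ∀ U, Measure.map (act U) σ = σ) (x y : Fin n → Fin d) (h : cls x ≠ cls y) :
    F σ x y = 0 := by
  have hj : ∃ j, Multiset.count j (cls x).1 ≠ Multiset.count j (cls y).1 := by
    by_contra hcon
    push Not at hcon
    exact h (Subtype.ext (Multiset.ext.2 hcon))
  obtain ⟨j, hj⟩ := hj
  rw [count_cls, count_cls] at hj
  set a := (univ.filter (fun i => x i = j)).card with ha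
  set b := (univ.filter (fun i => y i = j)).card with hb
  have hab : ((a : ℂ) - b) ≠ 0 := sub_ne_zero.2 (by exact_mod_cast hj)
  let θ : ℝ := Real.pi / ((a : ℝ) - b)
  let c : ℂ := Complex.exp (θ * Complex.I)
  have hc : ‖c‖ = 1 := Complex.norm_exp_ofReal_mul_I θ
  let u : Fin d → ℂ := fun k => if k = j then c else 1
  have hu : ∀ k, ‖u k‖ = 1 := by
    intro k
    by_cases hk : k = j <;> simp [u, hk, hc]
  have hprod : ∀ z : Fin n → Fin d, ∏ i, u (z i) = c ^ (univ.filter (fun i => z i = j)).card := by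
    intro z
    simp only [u]
    rw [Finset.prod_ite]
    simp
  have hphase : c ^ a * (starRingEnd ℂ) (c ^ b) = -1 := by
    have h1 : (starRingEnd ℂ) c = Complex.exp (-(θ * Complex.I)) := by
      rw [← Complex.exp_conj]; simp
    rw [map_pow, h1, ← Complex.exp_nat_mul, ← Complex.exp_nat_mul, ← Complex.exp_add,
      ← Complex.exp_pi_mul_I]
    congr 1
    simp only [θ]
    push_cast
    field_simp
    ring
  have hinv := integral_act σ hσ (diagU u hu) _ (cont_F x y)
  have : F σ x y = (-1) * F σ x y := by
    conv_lhs => unfold F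
    rw [← hinv]
    unfold F
    rw [← integral_const_mul]
    congr 1
    funext ψ
    show (∏ i, (u (x i) * (ψ : EuclideanSpace ℂ (Fin d)) (x i))) *
      (starRingEnd ℂ) (∏ i, (u (y i) * (ψ : EuclideanSpace ℂ (Fin d)) (y i))) = _
    rw [Finset.prod_mul_distrib, Finset.prod_mul_distrib, hprod, hprod, ← ha, ← hb, ← hphase,
      map_mul]
    ring
  have h2 : (2 : ℂ) * F σ x y = 0 := by linear_combination this
  exact (mul_eq_zero.1 h2).resolve_left two_ne_zero

lemma F_quad {d n : ℕ} (σ : Measure (Sph d)) [IsProbabilityMeasure σ] (v : Fin d → ℂ) :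
    ∑ x : Fin n → Fin d, ∑ y : Fin n → Fin d,
      F σ x y * ((∏ i, v (x i)) * (starRingEnd ℂ) (∏ i, v (y i))) =
    ∫ ψ : Sph d, ((∑ j, v j * (ψ : EuclideanSpace ℂ (Fin d)) j) *
       (starRingEnd ℂ) (∑ j, v j * (ψ : EuclideanSpace ℂ (Fin d)) j)) ^ n ∂σ := by
  have : ∀ ψ : Sph d, ((∑ j, v j * (ψ : EuclideanSpace ℂ (Fin d)) j) *
       (starRingEnd ℂ) (∑ j, v j * (ψ : EuclideanSpace ℂ (Fin d)) j)) ^ n =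
      ∑ x : Fin n → Fin d, ∑ y : Fin n → Fin d,
       ((∏ i : Fin n, (ψ : EuclideanSpace ℂ (Fin d)) (x i)) *
          (starRingEnd ℂ) (∏ i : Fin n, (ψ : EuclideanSpace ℂ (Fin d)) (y i))) *
        ((∏ i, v (x i)) * (starRingEnd ℂ) (∏ i, v (y i))) := by
    intro ψ
    rw [mul_pow, ← map_pow, Finset.sum_pow', Fintype.piFinset_univ, map_sum, Finset.sum_mul_sum]
    apply Finset.sum_congr rfl
    intro x _
    apply Finset.sum_congr rfl
    intro y _
    rw [Finset.prod_mul_distrib, Finset.prod_mul_distrib, map_mul]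
    ring
  simp only [this]
  rw [integral_finsetSum]
  · apply Finset.sum_congr rfl
    intro x _
    rw [integral_finsetSum]
    · apply Finset.sum_congr rfl
      intro y _
      rw [integral_mul_const]; rfl
    · intro y _
      exact integrable_of_cont σ _ ((cont_F x y).mul continuous_const)
  · intro x _
    exact integrable_of_cont σ _ (continuous_finsetSum _ fun y _ => (cont_F x y).mul continuous_const)

/-- the constant -/
noncomputable def cc {d : ℕ} (σ : Measure (Sph d)) (n : ℕ) (j0 : Fin d) : ℂ :=
  ∫ ψ : Sph d, ((ψ : EuclideanSpace ℂ (Fin d)) j0 *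
      (starRingEnd ℂ) ((ψ : EuclideanSpace ℂ (Fin d)) j0)) ^ n ∂σ

lemma unit_int {d : ℕ} (σ : Measure (Sph d)) (hσ : ∀ U, Measure.map (act U) σ = σ) (n : ℕ)
    (j0 : Fin d) (v : EuclideanSpace ℂ (Fin d)) (hv : ‖v‖ = 1) :
    ∫ ψ : Sph d, (inner ℂ v (ψ : EuclideanSpace ℂ (Fin d)) *
       (starRingEnd ℂ) (inner ℂ v (ψ : EuclideanSpace ℂ (Fin d)))) ^ n ∂σ = cc σ n j0 := by
  obtain ⟨b, hb⟩ := Orthonormal.exists_orthonormalBasis_extension_of_card_eq (𝕜 := ℂ)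
    (E := EuclideanSpace ℂ (Fin d)) (ι := Fin d) (by simp) (v := fun _ => v) (s := {j0}) (by
      rw [orthonormal_iff_ite]
      intro i j
      have : i = j := Subsingleton.elim _ _
      subst this
      simp [hv])
  unfold cc
  rw [← integral_act σ hσ b.repr (fun ψ : Sph d => ((ψ : EuclideanSpace ℂ (Fin d)) j0 *
      (starRingEnd ℂ) ((ψ : EuclideanSpace ℂ (Fin d)) j0)) ^ n)]
  · congr 1
    funext ψ
    show _ = ((b.repr (ψ : EuclideanSpace ℂ (Fin d))) j0 *
      (starRingEnd ℂ) ((b.repr (ψ : EuclideanSpace ℂ (Fin d))) j0)) ^ n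
    rw [b.repr_apply_apply, hb j0 rfl]
  · exact ((cont_coord j0).mul (Complex.continuous_conj.comp (cont_coord j0))).pow n

lemma pos_int {d : ℕ} (σ : Measure (Sph d)) (hσ : ∀ U, Measure.map (act U) σ = σ) (n : ℕ)
    (j0 : Fin d) (t : Fin d → ℝ) (ht : ∀ j, 0 < t j) :
    ∫ ψ : Sph d, ((∑ j, (Real.sqrt (t j) : ℂ) * (ψ : EuclideanSpace ℂ (Fin d)) j) *
       (starRingEnd ℂ) (∑ j, (Real.sqrt (t j) : ℂ) * (ψ : EuclideanSpace ℂ (Fin d)) j)) ^ n ∂σ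
      = cc σ n j0 * (∑ j, (t j : ℂ)) ^ n := by
  set T : ℝ := ∑ j, t j with hT
  have hTpos : 0 < T := Finset.sum_pos (fun j _ => ht j) ⟨j0, mem_univ _⟩
  let v : EuclideanSpace ℂ (Fin d) :=
    WithLp.toLp 2 (fun j => ((Real.sqrt (t j) / Real.sqrt T : ℝ) : ℂ))
  have hv : ‖v‖ = 1 := by
    rw [EuclideanSpace.norm_eq, Real.sqrt_eq_one]
    have : ∀ j, ‖v j‖ ^ 2 = t j / T := by
      intro j
      show ‖((Real.sqrt (t j) / Real.sqrt T : ℝ) : ℂ)‖ ^ 2 = _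
      rw [Complex.norm_real, Real.norm_eq_abs, sq_abs, div_pow, Real.sq_sqrt (ht j).le,
        Real.sq_sqrt hTpos.le]
    simp only [this]
    rw [← Finset.sum_div, ← hT, div_self hTpos.ne']
  rw [← unit_int σ hσ n j0 v hv, ← integral_mul_const]
  congr 1
  funext ψ
  have hs : (∑ j, (Real.sqrt (t j) : ℂ) * (ψ : EuclideanSpace ℂ (Fin d)) j) =
      (Real.sqrt T : ℂ) * inner ℂ v (ψ : EuclideanSpace ℂ (Fin d)) := by
    rw [PiLp.inner_apply, Finset.mul_sum]
    apply Finset.sum_congr rfl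
    intro j _
    have hne : (Real.sqrt T : ℂ) ≠ 0 := by exact_mod_cast (Real.sqrt_pos.2 hTpos).ne'
    show _ = (Real.sqrt T : ℂ) * ((ψ : EuclideanSpace ℂ (Fin d)) j *
      (starRingEnd ℂ) ((Real.sqrt (t j) / Real.sqrt T : ℝ) : ℂ))
    rw [Complex.conj_ofReal]
    push_cast
    field_simp
  rw [hs, map_mul, Complex.conj_ofReal, ← mul_pow]
  congr 1
  have hsq : (Real.sqrt T : ℂ) * (Real.sqrt T : ℂ) = ∑ j, (t j : ℂ) := by
    rw [← Complex.ofReal_mul, Real.mul_self_sqrt hTpos.le, hT]; push_cast; rfl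
  rw [← hsq]; ring

lemma F_diag {d n : ℕ} (σ : Measure (Sph d)) [IsProbabilityMeasure σ]
    (hσ : ∀ U, Measure.map (act U) σ = σ) (j0 : Fin d) (x0 : Fin n → Fin d) :
    ((univ.filter (fun z : Fin n → Fin d => cls z = cls x0)).card : ℂ) * F σ x0 x0
      = cc σ n j0 := by
  classical
  have key := poly_compare (fun x : Fin n → Fin d => ∑ y, F σ x y - cc σ n j0) (by
    intro t ht
    have h1 := F_quad (n := n) σ (fun j => (Real.sqrt (t j) : ℂ))
    rw [pos_int σ hσ n j0 t ht, Finset.sum_pow', Fintype.piFinset_univ, Finset.mul_sum] at h1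
    rw [← sub_eq_zero, ← Finset.sum_sub_distrib] at h1
    rw [← h1]
    apply Finset.sum_congr rfl
    intro x _
    rw [sub_mul, Finset.sum_mul]
    congr 1
    apply Finset.sum_congr rfl
    intro y _
    by_cases hxy : cls x = cls y
    · congr 1
      rw [prod_cls (fun j => (Real.sqrt (t j) : ℂ)) y, ← hxy, ← prod_cls, map_prod,
        ← Finset.prod_mul_distrib]
      apply Finset.prod_congr rfl
      intro i _
      rw [Complex.conj_ofReal, ← Complex.ofReal_mul, Real.mul_self_sqrt (ht _).le]
    · rw [F_off σ hσ x y hxy]; simp) x0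
  set N := univ.filter (fun z : Fin n → Fin d => cls z = cls x0) with hN
  have hrow : ∀ x ∈ N, (∑ y, F σ x y - cc σ n j0) = (N.card : ℂ) * F σ x0 x0 - cc σ n j0 := by
    intro x hx
    have hx' : cls x = cls x0 := by simpa [hN] using hx
    congr 1
    rw [← nsmul_eq_mul, ← Finset.sum_const, hN, Finset.sum_filter]
    apply Finset.sum_congr rfl
    intro y _
    split_ifs with hy
    · exact F_congr σ _ _ _ _ hx' hy
    · exact F_off σ hσ x y (fun h => hy (by rw [← h, hx']))
  rw [Finset.sum_congr rfl hrow, Finset.sum_const, nsmul_eq_mul] at key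
  have hpos : (N.card : ℂ) ≠ 0 := by
    have : 0 < N.card := Finset.card_pos.2 ⟨x0, by simp [hN]⟩
    exact_mod_cast this.ne'
  exact sub_eq_zero.1 ((mul_eq_zero.1 key).resolve_left hpos)

lemma sum_F {d n : ℕ} (σ : Measure (Sph d)) [IsProbabilityMeasure σ] :
    ∑ x : Fin n → Fin d, F σ x x = 1 := by
  unfold F
  rw [← integral_finsetSum _ (fun x _ => integrable_of_cont σ _ (cont_F x x))]
  have : ∀ ψ : Sph d, ∑ x : Fin n → Fin d, (∏ i : Fin n, (ψ : EuclideanSpace ℂ (Fin d)) (x i)) *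
          (starRingEnd ℂ) (∏ i : Fin n, (ψ : EuclideanSpace ℂ (Fin d)) (x i)) = 1 := by
    intro ψ
    have h1 : ∑ j, (ψ : EuclideanSpace ℂ (Fin d)) j *
        (starRingEnd ℂ) ((ψ : EuclideanSpace ℂ (Fin d)) j) = 1 := by
      have h2 := EuclideanSpace.norm_sq_eq (ψ : EuclideanSpace ℂ (Fin d))
      rw [mem_sphere_zero_iff_norm.mp ψ.2] at h2
      simp only [Complex.mul_conj, Complex.normSq_eq_norm_sq]
      rw [← Complex.ofReal_sum, ← h2]; simp
    rw [← one_pow n, ← h1, Finset.sum_pow', Fintype.piFinset_univ]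
    apply Finset.sum_congr rfl
    intro x _
    rw [map_prod, Finset.prod_mul_distrib]
  simp only [this]
  simp

lemma main {d : ℕ} (hd : 1 ≤ d) (σ : Measure (Sph d)) [IsProbabilityMeasure σ]
    (hσ : ∀ U, Measure.map (act U) σ = σ) (n : ℕ) (x y : Fin n → Fin d) :
    ((n + d - 1).choose n : ℂ) * F σ x y =
      ((univ.filter (fun π : Equiv.Perm (Fin n) => x ∘ π = y)).card : ℂ)
          / (n.factorial : ℂ) := by
  classical
  by_cases hxy : cls x = cls y
  · let j0 : Fin d := ⟨0, hd⟩
    have hne : ∀ x : Fin n → Fin d,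
        ((univ.filter (fun z : Fin n → Fin d => cls z = cls x)).card : ℂ) ≠ 0 := by
      intro x
      have : 0 < (univ.filter (fun z : Fin n → Fin d => cls z = cls x)).card :=
        Finset.card_pos.2 ⟨x, by simp⟩
      exact_mod_cast this.ne'
    have hF : ∀ x : Fin n → Fin d, F σ x x = cc σ n j0 *
        ((univ.filter (fun z : Fin n → Fin d => cls z = cls x)).card : ℂ)⁻¹ := by
      intro x
      rw [← F_diag σ hσ j0 x, mul_comm, inv_mul_cancel_left₀ (hne x)]
    have hc : cc σ n j0 * ((n + d - 1).choose n : ℂ) = 1 := by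
      rw [← sum_inv_card hd, Finset.mul_sum, ← sum_F (n := n) σ]
      exact Finset.sum_congr rfl fun x _ => (hF x).symm
    rw [F_congr σ x y x x rfl hxy.symm, hF, ← mul_assoc, mul_comm _ (cc σ n j0), hc, one_mul]
    have ho := card_orbit x y hxy
    have ho' : ((univ.filter (fun z : Fin n → Fin d => cls z = cls x)).card : ℂ) *
      ((univ.filter (fun π : Equiv.Perm (Fin n) => x ∘ π = y)).card : ℂ) = (n.factorial : ℂ) := by
      exact_mod_cast ho
    have hf : (n.factorial : ℂ) ≠ 0 := by exact_mod_cast n.factorial_ne_zero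
    rw [eq_div_iff hf, ← ho', inv_mul_cancel_left₀ (hne x)]
  · rw [F_off σ hσ x y hxy, Finset.filter_eq_empty_iff.2]
    · simp
    · intro π _ h
      exact hxy ((cls_eq_iff _ _).2 ⟨π, h⟩)

end SymProj

/-- If `σ` is the rotation-invariant probability measure on the unit sphere of
`ℂ^d`, then `C(n+d−1,n)` times the average over `ψ` of the `(x,y)` entry of the
rank-one projector onto `ψ^⊗n` equals the `(x,y)` entry of the projector onto
the symmetric subspace of `(ℂ^d)^⊗n`, namely `#{π : x ∘ π = y} / n!`. -/
theorem sphere_integral_symmetric_projector {d : ℕ} (hd : 1 ≤ d)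
    (σ : Measure (Metric.sphere (0 : EuclideanSpace ℂ (Fin d)) 1))
    [IsProbabilityMeasure σ]
    (hσ : ∀ U : EuclideanSpace ℂ (Fin d) ≃ₗᵢ[ℂ] EuclideanSpace ℂ (Fin d),
      Measure.map (fun ψ : Metric.sphere (0 : EuclideanSpace ℂ (Fin d)) 1 =>
        (⟨U ψ, by
          simp [mem_sphere_zero_iff_norm, U.norm_map,
            mem_sphere_zero_iff_norm.mp ψ.2]⟩ :
          Metric.sphere (0 : EuclideanSpace ℂ (Fin d)) 1)) σ = σ)
    (n : ℕ) (x y : Fin n → Fin d) :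
    ((n + d - 1).choose n : ℂ) *
      ∫ ψ : Metric.sphere (0 : EuclideanSpace ℂ (Fin d)) 1,
        (∏ i : Fin n, (ψ : EuclideanSpace ℂ (Fin d)) (x i)) *
          (starRingEnd ℂ) (∏ i : Fin n, (ψ : EuclideanSpace ℂ (Fin d)) (y i)) ∂σ
      = ((Finset.univ.filter (fun π : Equiv.Perm (Fin n) => x ∘ π = y)).card : ℂ)
          / (n.factorial : ℂ) := by
  exact SymProj.main hd σ hσ n x y
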